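/- arXiv:2508.18433 — 5 statements merged into one kernel-verified Lean document; each statement's English description precedes it below -/
import Mathlib

section
/- Let K be a field, g ≥ 1, let λ₁, …, λ_g ∈ K be pairwise distinct and μ₁, …, μ_g ∈ K. Set β(λ) := Π_{m=1}^{g}(λ−λ_m) and, for k ∈ [1, g], let β_{k−1}(λ) := [λ^{k−1−g}β(λ)]_{∞,+} be the polynomial part at infinity (if β(λ) = Σ_{i=0}^{g} b_iλ^{i} then β_{k−1}(λ) = Σ_{i=g+1−k}^{g} b_iλ^{i−(g+1−k)}). Then for every k ∈ [1, g]: Res_{λ→∞} [ λ^{−(g+1−k)} · Σ_{j=1}^{g} (μ_j/(λ−λ_j)) · Π_{m≠j}((λ−λ_m)/(λ_j−λ_m)) ] = −Σ_{j=1}^{g} μ_j·β'_{k−1}(λ_j) / Π_{i≠j}(λ_j−λ_i), where Res_{λ→∞}F(λ) := −(coefficient of λ^{−1} in the expansion of the rational function F in decreasing powers of λ), and β'_{k−1} is the formal derivative of the polynomial β_{k−1}. -/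
/-!
A partial fraction `P(λ) / (λ - a)` is a polynomial plus `P(a) / (λ - a)`, so its residue at
infinity is `-P(a)`. The factor `λ⁻ⁿ` replaces `P` by the polynomial part `Pₙ` of `λ⁻ⁿ P`: the
discarded negative powers of `λ`, divided by `λ - a`, are `O(λ⁻²)`. Finally, if `β = (λ - a) P`,
then taking polynomial parts gives `βₙ = (λ - a) Pₙ + const`, whence `Pₙ(a) = βₙ'(a)`. Apply this
with `a = λ_j` to each summand.
-/

section PolynomialPart

open Polynomial

theorem coeff_iterate_divX {R : Type*} [Semiring R] (n : ℕ) (P : R[X]) (i : ℕ) :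
    (divX^[n] P).coeff i = P.coeff (i + n) := by
  induction n generalizing P with
  | zero => rfl
  | succ n ih => rw [Function.iterate_succ_apply, ih, coeff_divX, add_assoc]

theorem sum_Icc_C_coeff_mul_X_pow_sub {R : Type*} [Semiring R] {P : R[X]} {d : ℕ}
    (hP : P.natDegree ≤ d) (n : ℕ) :
    ∑ i ∈ Finset.Icc n d, C (P.coeff i) * X ^ (i - n) = divX^[n] P := by
  ext m
  simp only [finsetSum_coeff, coeff_C_mul_X_pow, coeff_iterate_divX]
  rw [Finset.sum_eq_single (m + n)]
  · simp
  · intro i hi hne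
    rw [Finset.mem_Icc] at hi
    exact if_neg (by lia)
  · intro hm
    have hd : d < m + n := by simpa using hm
    simp [coeff_eq_zero_of_natDegree_lt (hP.trans_lt hd)]

theorem divX_X_sub_C_mul_add_C {R : Type*} [Ring R] (a c : R) (P : R[X]) :
    divX ((X - C a) * P + C c) = (X - C a) * divX P + C (P.coeff 0) := by
  ext (_ | i)
  · simp [sub_mul, coeff_divX, neg_add_eq_sub]
  · simp [sub_mul, coeff_divX]

theorem exists_iterate_divX_X_sub_C_mul {R : Type*} [Ring R] (n : ℕ) (a : R) (P : R[X]) :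
    ∃ c, divX^[n] ((X - C a) * P) = (X - C a) * divX^[n] P + C c := by
  induction n with
  | zero => exact ⟨0, by simp⟩
  | succ n ih =>
    obtain ⟨c, hc⟩ := ih
    exact ⟨(divX^[n] P).coeff 0, by
      simp only [Function.iterate_succ_apply', hc, divX_X_sub_C_mul_add_C]⟩

theorem eval_derivative_iterate_divX_X_sub_C_mul {R : Type*} [CommRing R] (n : ℕ) (a : R)
    (P : R[X]) : (derivative (divX^[n] ((X - C a) * P))).eval a = (divX^[n] P).eval a := by
  obtain ⟨c, hc⟩ := exists_iterate_divX_X_sub_C_mul n a P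
  simp [hc]

end PolynomialPart

section ResidueAtInfinity

open Polynomial

variable {K : Type*} [Field K]

theorem coe_ratFunc_C (a : K) : ((RatFunc.C a : RatFunc K) : LaurentSeries K) = HahnSeries.C a := by
  rw [← RatFunc.algebraMap_C, ← RatFunc.coePolynomial_eq_algebraMap, ← RatFunc.coe_coe,
    Polynomial.coe_C, PowerSeries.coe_C]

/-- The residue at `λ = ∞` of a rational function `F`, as a linear functional of `F` written in the
local coordinate `t = λ⁻¹`: the argument is `H(t) = F(t⁻¹)`, so that `λ` corresponds to
`RatFunc.X⁻¹` and the coefficient of `λ⁻¹` in the expansion of `F` is that of `t` in `H`. -/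
noncomputable def residueAtInfinity : RatFunc K →ₗ[K] K where
  toFun H := -(H : LaurentSeries K).coeff 1
  map_add' F G := by rw [map_add, HahnSeries.coeff_add, neg_add]
  map_smul' c F := by
    rw [RatFunc.smul_eq_C_mul, map_mul, coe_ratFunc_C, HahnSeries.C_mul_eq_smul,
      HahnSeries.coeff_smul, smul_neg, RingHom.id_apply]

theorem residueAtInfinity_eq_neg_coeff {H : RatFunc K} {f : PowerSeries K}
    (h : (H : LaurentSeries K) = f) : residueAtInfinity H = -PowerSeries.coeff 1 f := by
  have coeff_eq : (H : LaurentSeries K).coeff 1 = PowerSeries.coeff 1 f := by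
    rw [h]
    exact LaurentSeries.coeff_coe_powerSeries f 1
  exact congrArg Neg.neg coeff_eq

theorem inv_X_sub_C_ne_zero (a : K) : (RatFunc.X : RatFunc K)⁻¹ - RatFunc.C a ≠ 0 := by
  intro h
  have hdeg := congrArg RatFunc.intDegree (sub_eq_zero.mp h)
  simp [RatFunc.intDegree_inv] at hdeg

theorem residueAtInfinity_aeval_inv_X (P : K[X]) :
    residueAtInfinity (aeval (RatFunc.X : RatFunc K)⁻¹ P) = 0 := by
  induction P using Polynomial.induction_on' with
  | add P Q hP hQ => rw [map_add, map_add, hP, hQ, add_zero]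
  | monomial i c =>
    have hcoeff : ((RatFunc.X⁻¹ ^ i : RatFunc K) : LaurentSeries K).coeff 1 = 0 := by
      rw [map_pow, map_inv₀, RatFunc.coe_X, HahnSeries.inv_single, HahnSeries.single_pow,
        HahnSeries.coeff_single_of_ne (by rw [nsmul_eq_mul]; lia)]
    have hres : residueAtInfinity (RatFunc.X⁻¹ ^ i : RatFunc K) = 0 := neg_eq_zero.mpr hcoeff
    rw [aeval_monomial, ← Algebra.smul_def, map_smul, hres, smul_zero]

theorem coe_X_pow_div_inv_X_sub_C (n : ℕ) (a : K) :
    ((RatFunc.X ^ n / (RatFunc.X⁻¹ - RatFunc.C a) : RatFunc K) : LaurentSeries K) =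
      (PowerSeries.X ^ (n + 1) * (1 - PowerSeries.C a * PowerSeries.X)⁻¹ : PowerSeries K) := by
  set U : PowerSeries K := (1 - PowerSeries.C a * PowerSeries.X)⁻¹
  have hU : (1 - HahnSeries.C a * HahnSeries.single 1 1) * (U : LaurentSeries K) = 1 := by
    rw [← PowerSeries.coe_X, ← PowerSeries.coe_C, ← PowerSeries.coe_one, ← PowerSeries.coe_mul,
      ← PowerSeries.coe_sub, ← PowerSeries.coe_mul, PowerSeries.mul_inv_cancel _ (by simp)]
  have hT : (HahnSeries.single 1 1 : LaurentSeries K) ≠ 0 := by simp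
  have hden : ((RatFunc.X⁻¹ - RatFunc.C a : RatFunc K) : LaurentSeries K) ≠ 0 :=
    (_root_.map_ne_zero _).mpr (inv_X_sub_C_ne_zero a)
  rw [map_div₀, div_eq_iff hden]
  simp only [map_pow, map_sub, map_inv₀, RatFunc.coe_X, coe_ratFunc_C, map_mul, PowerSeries.coe_X]
  set T : LaurentSeries K := HahnSeries.single 1 1
  calc T ^ n = T ^ n * ((1 - HahnSeries.C a * T) * (U : LaurentSeries K)) := by rw [hU, mul_one]
    _ = T ^ (n + 1) * (U : LaurentSeries K) * (T⁻¹ - HahnSeries.C a) := by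
      rw [pow_succ]
      field_simp

theorem residueAtInfinity_one_div_inv_X_sub_C (a : K) :
    residueAtInfinity (1 / (RatFunc.X⁻¹ - RatFunc.C a)) = -1 := by
  have h := residueAtInfinity_eq_neg_coeff (coe_X_pow_div_inv_X_sub_C 0 a)
  simpa [PowerSeries.coeff_X_pow_mul'] using h

theorem residueAtInfinity_X_pow_succ_div_inv_X_sub_C (n : ℕ) (a : K) :
    residueAtInfinity (RatFunc.X ^ (n + 1) / (RatFunc.X⁻¹ - RatFunc.C a)) = 0 := by
  have h := residueAtInfinity_eq_neg_coeff (coe_X_pow_div_inv_X_sub_C (n + 1) a)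
  simpa [PowerSeries.coeff_X_pow_mul'] using h

theorem residueAtInfinity_aeval_inv_X_div_sub_C (a : K) (P : K[X]) :
    residueAtInfinity (aeval RatFunc.X⁻¹ P / (RatFunc.X⁻¹ - RatFunc.C a)) = -P.eval a := by
  have hdiv : aeval RatFunc.X⁻¹ P / (RatFunc.X⁻¹ - RatFunc.C a) =
      aeval RatFunc.X⁻¹ (P /ₘ (X - C a)) + P.eval a • (1 / (RatFunc.X⁻¹ - RatFunc.C a)) := by
    have hP := congrArg (aeval (RatFunc.X : RatFunc K)⁻¹) (modByMonic_add_div P (X - C a))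
    simp only [modByMonic_X_sub_C_eq_C_eval, map_add, map_mul, map_sub, aeval_X, aeval_C,
      RatFunc.algebraMap_eq_C] at hP
    rw [RatFunc.smul_eq_C_mul, div_eq_iff (inv_X_sub_C_ne_zero a), add_mul, mul_assoc,
      one_div_mul_cancel (inv_X_sub_C_ne_zero a), ← hP]
    ring
  rw [hdiv, map_add, map_smul, residueAtInfinity_aeval_inv_X, residueAtInfinity_one_div_inv_X_sub_C,
    smul_eq_mul, mul_neg_one, zero_add]

theorem X_mul_aeval_inv_X (P : K[X]) :
    RatFunc.X * aeval (RatFunc.X : RatFunc K)⁻¹ P =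
      aeval RatFunc.X⁻¹ (divX P) + P.coeff 0 • RatFunc.X := by
  conv_lhs => rw [← X_mul_divX_add P]
  rw [map_add, map_mul, aeval_X, aeval_C, mul_add, mul_inv_cancel_left₀ RatFunc.X_ne_zero,
    Algebra.smul_def, mul_comm (algebraMap _ _ _)]

theorem residueAtInfinity_X_pow_mul_aeval_inv_X_div_sub_C (n : ℕ) (a : K) (P : K[X]) :
    residueAtInfinity (RatFunc.X ^ n * (aeval RatFunc.X⁻¹ P / (RatFunc.X⁻¹ - RatFunc.C a))) =
      -(divX^[n] P).eval a := by
  induction n generalizing P with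
  | zero =>
    rw [pow_zero, one_mul, residueAtInfinity_aeval_inv_X_div_sub_C, Function.iterate_zero_apply]
  | succ n ih =>
    have hsplit : RatFunc.X ^ (n + 1) * (aeval RatFunc.X⁻¹ P / (RatFunc.X⁻¹ - RatFunc.C a)) =
        RatFunc.X ^ n * (aeval RatFunc.X⁻¹ (divX P) / (RatFunc.X⁻¹ - RatFunc.C a)) +
          P.coeff 0 • (RatFunc.X ^ (n + 1) / (RatFunc.X⁻¹ - RatFunc.C a)) := by
      rw [pow_succ, mul_assoc, mul_div_assoc', X_mul_aeval_inv_X]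
      simp only [RatFunc.smul_eq_C_mul]
      ring
    rw [hsplit, map_add, map_smul, ih, residueAtInfinity_X_pow_succ_div_inv_X_sub_C, smul_zero,
      add_zero, Function.iterate_succ_apply]

theorem C_div_mul_prod_sub_C_div {ι : Type*} (s : Finset ι) (F : RatFunc K) (c a : K)
    (lam : ι → K) :
    RatFunc.C c / (F - RatFunc.C a) *
        ∏ m ∈ s, (F - RatFunc.C (lam m)) / (RatFunc.C a - RatFunc.C (lam m)) =
      (c / ∏ m ∈ s, (a - lam m)) • ((∏ m ∈ s, (F - RatFunc.C (lam m))) / (F - RatFunc.C a)) := by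
  simp only [RatFunc.smul_eq_C_mul, map_div₀, map_prod, map_sub, Finset.prod_div_distrib]
  ring

/-- Here `c j` stands for `μ_j / ∏_{i ≠ j} (λ_j - λ_i)`, and `divX^[n]` takes the polynomial part of
`λ⁻ⁿ β(λ)`. -/
theorem residue_at_infinity_correction_term_general {ι : Type*} [DecidableEq ι] (s : Finset ι)
    (lam c : ι → K) (n : ℕ) :
    residueAtInfinity (RatFunc.X ^ n * ∑ j ∈ s, c j • ((∏ m ∈ s.erase j,
        (RatFunc.X⁻¹ - RatFunc.C (lam m))) / (RatFunc.X⁻¹ - RatFunc.C (lam j)))) =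
      -∑ j ∈ s, c j * (derivative (divX^[n] (∏ m ∈ s, (X - C (lam m))))).eval (lam j) := by
  rw [Finset.mul_sum, map_sum, ← Finset.sum_neg_distrib]
  refine Finset.sum_congr rfl fun j hj => ?_
  have haeval : ∏ m ∈ s.erase j, (RatFunc.X⁻¹ - RatFunc.C (lam m)) =
      aeval (RatFunc.X : RatFunc K)⁻¹ (∏ m ∈ s.erase j, (X - C (lam m))) := by
    simp only [map_prod, map_sub, aeval_X, aeval_C, RatFunc.algebraMap_eq_C]
  rw [mul_smul_comm, map_smul, haeval, residueAtInfinity_X_pow_mul_aeval_inv_X_div_sub_C,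
    ← Finset.mul_prod_erase s _ hj, eval_derivative_iterate_divX_X_sub_C_mul, smul_eq_mul, mul_neg]

end ResidueAtInfinity

/-- **Residue at infinity of the correction term (Lemma `LemmaEquality` ingredient).**
For pairwise distinct `λ₁,…,λ_g` and arbitrary `μ₁,…,μ_g` in a field `K`, set
`β(λ) = Π(λ-λ_m)` and let `β_{k-1}` be the polynomial part of `λ^{k-1-g}β(λ)`
at infinity.  The residue at `λ = ∞` of
`λ^{-(g+1-k)} Σ_j μ_j/(λ-λ_j) Π_{m≠j}(λ-λ_m)/(λ_j-λ_m)` equals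
`-Σ_j μ_j β'_{k-1}(λ_j)/Π_{i≠j}(λ_j-λ_i)`.  The residue at infinity is computed
by substituting `λ = t⁻¹` (so `Res_∞ F = -[t¹] F(t⁻¹)`, the Laurent expansion
at `t = 0` being given by the coercion `RatFunc K → LaurentSeries K`). -/
theorem residue_at_infinity_correction_term
    (K : Type) [Field K] (g : ℕ) (hg : 1 ≤ g)
    (lam mu : Fin g → K) (hdist : Function.Injective lam)
    (k : ℕ) (hk1 : 1 ≤ k) (hkg : k ≤ g) :
    let β : Polynomial K := ∏ m : Fin g, (Polynomial.X - Polynomial.C (lam m))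
    let βk : Polynomial K :=
      ∑ i ∈ Finset.Icc (g + 1 - k) g, Polynomial.C (β.coeff i) * Polynomial.X ^ (i - (g + 1 - k))
    let H : RatFunc K :=
      (RatFunc.X ^ (g + 1 - k) * ∑ j : Fin g,
        RatFunc.C (mu j) / ((RatFunc.X)⁻¹ - RatFunc.C (lam j)) *
          ∏ m ∈ Finset.univ.erase j,
            ((RatFunc.X)⁻¹ - RatFunc.C (lam m)) / (RatFunc.C (lam j) - RatFunc.C (lam m)))
    (-((H : LaurentSeries K).coeff 1) : K)
      = -(∑ j : Fin g,
          mu j * (Polynomial.derivative βk).eval (lam j)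
            / ∏ i ∈ Finset.univ.erase j, (lam j - lam i)) := by
  intro β βk H
  have hβ : β.natDegree ≤ g := by simp [β]
  have hβk : βk = Polynomial.divX^[g + 1 - k] β := sum_Icc_C_coeff_mul_X_pow_sub hβ _
  change residueAtInfinity H = _
  simp only [H, C_div_mul_prod_sub_C_div, residue_at_infinity_correction_term_general, hβk, β,
    mul_div_right_comm]
end

section
/- Let R be a commutative ring and α₁, β₁, γ₁, α₂, β₂, γ₂ ∈ R. In the 2×2 matrices over R set σ₃ := diag(1,−1), σ₊ := E₁₂, σ₋ := E₂₁, A₁ := α₁σ₃ + β₁σ₊ + γ₁σ₋, A₂ := α₂σ₃ + β₂σ₊ + γ₂σ₋, and let 𝒫 := E₁₁⊗E₁₁ + E₁₂⊗E₂₁ + E₂₁⊗E₁₂ + E₂₂⊗E₂₂ be the permutation operator in the Kronecker product. Then [A₁⊗I + I⊗A₂, 𝒫] = 2(α₁−α₂)(σ₊⊗σ₋ − σ₋⊗σ₊) + (β₁−β₂)(σ₃⊗σ₊ − σ₊⊗σ₃) − (γ₁−γ₂)(σ₃⊗σ₋ − σ₋⊗σ₃). -/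
/-- Kronecker product of two `2×2` matrices. -/
def kron {R : Type*} [CommRing R] (A B : Matrix (Fin 2) (Fin 2) R) :
    Matrix (Fin 2 × Fin 2) (Fin 2 × Fin 2) R :=
  Matrix.kroneckerMap (· * ·) A B

/-- The permutation operator `𝒫 = E₁₁⊗E₁₁ + E₁₂⊗E₂₁ + E₂₁⊗E₁₂ + E₂₂⊗E₂₂`. -/
def permP {R : Type*} [CommRing R] : Matrix (Fin 2 × Fin 2) (Fin 2 × Fin 2) R :=
  kron !![1, 0; 0, 0] !![1, 0; 0, 0] + kron !![0, 1; 0, 0] !![0, 0; 1, 0]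
    + kron !![0, 0; 1, 0] !![0, 1; 0, 0] + kron !![0, 0; 0, 1] !![0, 0; 0, 1]

/-!
Conjugation by `𝒫` exchanges the two tensor factors, so `B ⊗ I + I ⊗ B` commutes with `𝒫`. Since
`A₁ ⊗ I + I ⊗ A₂ = (A₁ - A₂) ⊗ I + (A₂ ⊗ I + I ⊗ A₂)`, the commutator with `𝒫` equals
`[(A₁ - A₂) ⊗ I, 𝒫]`. It is linear in `A₁ - A₂`, and on matrix units it is
`[Eᵢⱼ ⊗ I, 𝒫] = ∑ₖ (Eᵢₖ ⊗ Eₖⱼ - Eₖⱼ ⊗ Eᵢₖ)`.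
-/

open Matrix
open scoped Kronecker

section Swap

variable {l m n p R : Type*} [DecidableEq m] [DecidableEq n]

/-- The matrix of the exchange of tensor factors `v ⊗ w ↦ w ⊗ v`, also called the commutation
matrix. For `m = n` it is the permutation operator `𝒫`; the two factors may have different
dimensions, in which case its rows are indexed by `m × n` and its columns by `n × m`. -/
def tensorSwap (m n R : Type*) [DecidableEq m] [DecidableEq n] [Zero R] [One R] :
    Matrix (m × n) (n × m) R :=
  (Equiv.prodComm m n).toPEquiv.toMatrix

variable [Fintype m] [Fintype n]

theorem tensorSwap_eq_sum_single [NonAssocSemiring R] :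
    tensorSwap m n R = ∑ i : m, ∑ j : n, single i j 1 ⊗ₖ single j i 1 := by
  simp only [single_kronecker_single, mul_one]
  ext ⟨i, j⟩ ⟨k, r⟩
  simp [tensorSwap, Matrix.sum_apply, single_apply, ite_and]

variable [CommSemiring R]

theorem kronecker_mul_tensorSwap [DecidableEq l] [DecidableEq p] [Fintype l] [Fintype p]
    (A : Matrix l m R) (B : Matrix n p R) :
    A ⊗ₖ B * tensorSwap m p R = tensorSwap l n R * B ⊗ₖ A := by
  rw [tensorSwap, tensorSwap, PEquiv.mul_toMatrix_toPEquiv, PEquiv.toMatrix_toPEquiv_mul]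
  ext ⟨i, j⟩ ⟨k, r⟩
  exact mul_comm (A i r) (B j k)

theorem commute_kronecker_one_add_one_kronecker_tensorSwap (B : Matrix n n R) :
    Commute (B ⊗ₖ (1 : Matrix n n R) + (1 : Matrix n n R) ⊗ₖ B) (tensorSwap n n R) := by
  rw [commute_iff_eq, add_mul, mul_add, kronecker_mul_tensorSwap, kronecker_mul_tensorSwap,
    add_comm]

theorem single_kronecker_one_mul_tensorSwap [DecidableEq l] (i : l) (j : m) :
    single i j (1 : R) ⊗ₖ (1 : Matrix n n R) * tensorSwap m n R =
      ∑ k : n, single i k 1 ⊗ₖ single k j 1 := by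
  simp only [tensorSwap_eq_sum_single, Matrix.mul_sum, ← mul_kronecker_mul, Matrix.one_mul]
  rw [Finset.sum_eq_single_of_mem j (Finset.mem_univ j)]
  · simp only [single_mul_single_same, one_mul]
  · intro a _ ha
    simp only [single_mul_single_of_ne _ _ _ _ ha.symm, zero_kronecker, Finset.sum_const_zero]

theorem tensorSwap_mul_single_kronecker_one [DecidableEq l] (i : n) (j : l) :
    tensorSwap m n R * single i j (1 : R) ⊗ₖ (1 : Matrix m m R) =
      ∑ k : m, single k j 1 ⊗ₖ single i k 1 := by
  simp only [tensorSwap_eq_sum_single, Matrix.sum_mul, ← mul_kronecker_mul, Matrix.mul_one]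
  refine Finset.sum_congr rfl fun k _ => ?_
  rw [Finset.sum_eq_single_of_mem i (Finset.mem_univ i)]
  · rw [single_mul_single_same, one_mul]
  · intro b _ hb
    rw [single_mul_single_of_ne _ _ _ _ hb, zero_kronecker]

end Swap

section Commutator

attribute [local instance 100] LieRing.ofAssociativeRing

variable {n R : Type*} [DecidableEq n] [Fintype n] [CommRing R]

theorem lie_kronecker_one_add_one_kronecker_tensorSwap (A B : Matrix n n R) :
    ⁅A ⊗ₖ (1 : Matrix n n R) + (1 : Matrix n n R) ⊗ₖ B, tensorSwap n n R⁆ =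
      ⁅(A - B) ⊗ₖ (1 : Matrix n n R), tensorSwap n n R⁆ := by
  have split : A ⊗ₖ (1 : Matrix n n R) + (1 : Matrix n n R) ⊗ₖ B =
      (A - B) ⊗ₖ (1 : Matrix n n R) + (B ⊗ₖ (1 : Matrix n n R) + (1 : Matrix n n R) ⊗ₖ B) := by
    rw [← add_assoc, ← add_kronecker, sub_add_cancel]
  rw [split, add_lie, (commute_kronecker_one_add_one_kronecker_tensorSwap B).lie_eq, add_zero]

theorem lie_single_kronecker_one_tensorSwap (i j : n) :
    ⁅single i j (1 : R) ⊗ₖ (1 : Matrix n n R), tensorSwap n n R⁆ =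
      ∑ k : n, (single i k 1 ⊗ₖ single k j 1 - single k j 1 ⊗ₖ single i k 1) := by
  rw [Ring.lie_def, single_kronecker_one_mul_tensorSwap, tensorSwap_mul_single_kronecker_one,
    Finset.sum_sub_distrib]

section FinTwo

theorem of_fin_two_eq_sum_single {α : Type*} [AddCommMonoid α] (a b c d : α) :
    !![a, b; c, d] = single 0 0 a + single 0 1 b + single 1 0 c + single 1 1 d := by
  simpa [Fin.sum_univ_two, add_assoc] using matrix_eq_sum_single !![a, b; c, d]

theorem permP_eq_tensorSwap : (permP : Matrix (Fin 2 × Fin 2) (Fin 2 × Fin 2) R) =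
    tensorSwap (Fin 2) (Fin 2) R := by
  simp [permP, kron, of_fin_two_eq_sum_single, tensorSwap_eq_sum_single, Fin.sum_univ_two,
    add_assoc]

theorem sigmaThree_eq_single_add_single :
    (!![1, 0; 0, -1] : Matrix (Fin 2) (Fin 2) R) = single 0 0 1 + (-1 : R) • single 1 1 1 := by
  simp [of_fin_two_eq_sum_single, single_neg]

theorem lie_sigmaThree_kronecker_one_tensorSwap :
    ⁅!![1, 0; 0, -1] ⊗ₖ (1 : Matrix (Fin 2) (Fin 2) R), tensorSwap (Fin 2) (Fin 2) R⁆ =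
      (2 : R) • (!![0, 1; 0, 0] ⊗ₖ !![0, 0; 1, 0] - !![0, 0; 1, 0] ⊗ₖ !![0, 1; 0, 0]) := by
  rw [sigmaThree_eq_single_add_single]
  simp only [of_fin_two_eq_sum_single, single_zero, zero_add, add_zero, add_kronecker,
    smul_kronecker, add_lie, smul_lie, lie_single_kronecker_one_tensorSwap, Fin.sum_univ_two]
  module

theorem lie_sigmaPlus_kronecker_one_tensorSwap :
    ⁅!![0, 1; 0, 0] ⊗ₖ (1 : Matrix (Fin 2) (Fin 2) R), tensorSwap (Fin 2) (Fin 2) R⁆ =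
      !![1, 0; 0, -1] ⊗ₖ !![0, 1; 0, 0] - !![0, 1; 0, 0] ⊗ₖ !![1, 0; 0, -1] := by
  rw [sigmaThree_eq_single_add_single]
  simp only [of_fin_two_eq_sum_single, single_zero, zero_add, add_zero,
    lie_single_kronecker_one_tensorSwap, Fin.sum_univ_two, add_kronecker, kronecker_add,
    smul_kronecker, kronecker_smul]
  module

theorem lie_sigmaMinus_kronecker_one_tensorSwap :
    ⁅!![0, 0; 1, 0] ⊗ₖ (1 : Matrix (Fin 2) (Fin 2) R), tensorSwap (Fin 2) (Fin 2) R⁆ =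
      -(!![1, 0; 0, -1] ⊗ₖ !![0, 0; 1, 0] - !![0, 0; 1, 0] ⊗ₖ !![1, 0; 0, -1]) := by
  rw [sigmaThree_eq_single_add_single]
  simp only [of_fin_two_eq_sum_single, single_zero, zero_add, add_zero,
    lie_single_kronecker_one_tensorSwap, Fin.sum_univ_two, add_kronecker, kronecker_add,
    smul_kronecker, kronecker_smul]
  module

theorem lie_traceless_kronecker_one_tensorSwap (a b c : R) :
    ⁅(a • !![1, 0; 0, -1] + b • !![0, 1; 0, 0] + c • !![0, 0; 1, 0]) ⊗ₖ
        (1 : Matrix (Fin 2) (Fin 2) R), tensorSwap (Fin 2) (Fin 2) R⁆ =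
      (2 * a) • (!![0, 1; 0, 0] ⊗ₖ !![0, 0; 1, 0] - !![0, 0; 1, 0] ⊗ₖ !![0, 1; 0, 0])
        + b • (!![1, 0; 0, -1] ⊗ₖ !![0, 1; 0, 0] - !![0, 1; 0, 0] ⊗ₖ !![1, 0; 0, -1])
        - c • (!![1, 0; 0, -1] ⊗ₖ !![0, 0; 1, 0] - !![0, 0; 1, 0] ⊗ₖ !![1, 0; 0, -1]) := by
  simp only [add_kronecker, smul_kronecker, add_lie, smul_lie,
    lie_sigmaThree_kronecker_one_tensorSwap, lie_sigmaPlus_kronecker_one_tensorSwap,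
    lie_sigmaMinus_kronecker_one_tensorSwap]
  module

end FinTwo

end Commutator

/-- **The `r`-matrix part of the Mumford-system Poisson bracket:**
`[A₁⊗I + I⊗A₂, 𝒫] = 2(α₁-α₂)(σ₊⊗σ₋ - σ₋⊗σ₊) + (β₁-β₂)(σ₃⊗σ₊ - σ₊⊗σ₃)
  - (γ₁-γ₂)(σ₃⊗σ₋ - σ₋⊗σ₃)`. -/
theorem r_matrix_part_commutator (R : Type*) [CommRing R]
    (α1 β1 γ1 α2 β2 γ2 : R) :
    let σ3 : Matrix (Fin 2) (Fin 2) R := !![1, 0; 0, -1]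
    let σp : Matrix (Fin 2) (Fin 2) R := !![0, 1; 0, 0]
    let σm : Matrix (Fin 2) (Fin 2) R := !![0, 0; 1, 0]
    let A1 : Matrix (Fin 2) (Fin 2) R := α1 • σ3 + β1 • σp + γ1 • σm
    let A2 : Matrix (Fin 2) (Fin 2) R := α2 • σ3 + β2 • σp + γ2 • σm
    let X : Matrix (Fin 2 × Fin 2) (Fin 2 × Fin 2) R := kron A1 1 + kron 1 A2
    X * permP - permP * X
      = (2 * (α1 - α2)) • (kron σp σm - kron σm σp)
        + (β1 - β2) • (kron σ3 σp - kron σp σ3)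
        - (γ1 - γ2) • (kron σ3 σm - kron σm σ3) := by
  intro σ3 σp σm A1 A2 X
  have difference : A1 - A2 = (α1 - α2) • σ3 + (β1 - β2) • σp + (γ1 - γ2) • σm := by
    simp only [A1, A2]
    module
  calc
    X * permP - permP * X = ⁅A1 ⊗ₖ (1 : Matrix (Fin 2) (Fin 2) R) + 1 ⊗ₖ A2,
        tensorSwap (Fin 2) (Fin 2) R⁆ := by
      rw [permP_eq_tensorSwap, Ring.lie_def]
      rfl
    _ = ⁅(A1 - A2) ⊗ₖ (1 : Matrix (Fin 2) (Fin 2) R), tensorSwap (Fin 2) (Fin 2) R⁆ :=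
      lie_kronecker_one_add_one_kronecker_tensorSwap A1 A2
    _ = _ := by
      rw [difference]
      exact lie_traceless_kronecker_one_tensorSwap _ _ _
end

section
/- Let K be a field, λ, μ ∈ K with λ ≠ μ, and α(λ), β(λ), γ(λ), α(μ), β(μ), γ(μ) ∈ K. In the 2×2 matrices over K set σ₃ := diag(1,−1), σ₊ := E₁₂, σ₋ := E₂₁, 𝒜(λ) := α(λ)σ₃ + β(λ)σ₊ + γ(λ)σ₋ and 𝒜(μ) := α(μ)σ₃ + β(μ)σ₊ + γ(μ)σ₋; let 𝒫 := E₁₁⊗E₁₁ + E₁₂⊗E₂₁ + E₂₁⊗E₁₂ + E₂₂⊗E₂₂ and Δ := σ₋⊗σ₋ in the Kronecker product. Then [𝒜(λ)⊗I + I⊗𝒜(μ), (λ−μ)⁻¹𝒫] + [𝒜(λ)⊗I − I⊗𝒜(μ), Δ] = −2(α(λ)−α(μ))·σ₋⊗σ₋ + 2·((α(λ)−α(μ))/(λ−μ))·(σ₊⊗σ₋ − σ₋⊗σ₊) + ((β(λ)−β(μ))/(λ−μ))·(σ₃⊗σ₊ − σ₊⊗σ₃) − ((γ(λ)−γ(μ))/(λ−μ))·(σ₃⊗σ₋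 − σ₋⊗σ₃) + β(λ)·σ₃⊗σ₋ − β(μ)·σ₋⊗σ₃. -/
/-!
Conjugation by `𝒫` exchanges the two tensor factors, so `𝒫` commutes with `B ⊗ I + I ⊗ B`, and the
first bracket depends only on the difference `C = 𝒜(λ) - 𝒜(μ)`. Since
`𝒫 = E₁₁ ⊗ σ₃ + σ₊ ⊗ σ₋ + σ₋ ⊗ σ₊ + I ⊗ E₂₂`, this reduces `[C ⊗ I, 𝒫]`, like the bracket with
`Δ = σ₋ ⊗ σ₋`, to commutators of `2 × 2` matrices.
-/

section KroneckerBracket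

open Matrix
open scoped Kronecker

variable {l m n p R : Type*}

theorem sub_kronecker [NonUnitalNonAssocRing R] (A₁ A₂ : Matrix l m R) (B : Matrix n p R) :
    (A₁ - A₂) ⊗ₖ B = A₁ ⊗ₖ B - A₂ ⊗ₖ B := by
  ext
  exact sub_mul _ _ _

theorem kronecker_sub [NonUnitalNonAssocRing R] (A : Matrix l m R) (B₁ B₂ : Matrix n p R) :
    A ⊗ₖ (B₁ - B₂) = A ⊗ₖ B₁ - A ⊗ₖ B₂ := by
  ext
  exact mul_sub _ _ _

theorem prodComm_toMatrix_mul_kronecker [CommSemiring R]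
    [Fintype l] [Fintype m] [Fintype n] [Fintype p]
    [DecidableEq l] [DecidableEq m] [DecidableEq n] [DecidableEq p]
    (A : Matrix l m R) (B : Matrix n p R) :
    ((Equiv.prodComm n l).toPEquiv.toMatrix : Matrix _ _ R) * (A ⊗ₖ B) =
      (B ⊗ₖ A) * ((Equiv.prodComm p m).toPEquiv.toMatrix : Matrix _ _ R) := by
  rw [PEquiv.toMatrix_toPEquiv_mul, PEquiv.mul_toMatrix_toPEquiv]
  ext
  exact mul_comm _ _

variable [CommRing R] [Fintype m] [Fintype n] [DecidableEq n]

theorem kronecker_one_lie_kronecker (A C : Matrix m m R) (D : Matrix n n R) :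
    ⁅A ⊗ₖ (1 : Matrix n n R), C ⊗ₖ D⁆ = ⁅A, C⁆ ⊗ₖ D := by
  simp only [Ring.lie_def, ← mul_kronecker_mul, one_mul, mul_one, sub_kronecker]

theorem one_kronecker_lie_kronecker (B D : Matrix m m R) (C : Matrix n n R) :
    ⁅(1 : Matrix n n R) ⊗ₖ B, C ⊗ₖ D⁆ = C ⊗ₖ ⁅B, D⁆ := by
  simp only [Ring.lie_def, ← mul_kronecker_mul, one_mul, mul_one, kronecker_sub]

theorem kronecker_one_add_one_kronecker_lie_permMatrix (A B : Matrix n n R) :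
    ⁅A ⊗ₖ (1 : Matrix n n R) + (1 : Matrix n n R) ⊗ₖ B,
        Equiv.Perm.permMatrix R (Equiv.prodComm n n)⁆ =
      ⁅(A - B) ⊗ₖ (1 : Matrix n n R), Equiv.Perm.permMatrix R (Equiv.prodComm n n)⁆ := by
  have hleft := prodComm_toMatrix_mul_kronecker B (1 : Matrix n n R)
  have hright := prodComm_toMatrix_mul_kronecker (1 : Matrix n n R) B
  simp only [Ring.lie_def, sub_kronecker, add_mul, mul_add, sub_mul, mul_sub, Equiv.Perm.permMatrix,
    hleft, hright]
  abel

end KroneckerBracket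

section PauliBracket

open Matrix
open scoped Kronecker

attribute [local instance] LieRing.ofAssociativeRing

variable (R : Type*) [CommRing R]

/-- The Pauli matrix `σ₃`. -/
def sigma3 : Matrix (Fin 2) (Fin 2) R := !![1, 0; 0, -1]

/-- The raising matrix `σ₊ = E₁₂`. -/
def sigmaPlus : Matrix (Fin 2) (Fin 2) R := !![0, 1; 0, 0]

/-- The lowering matrix `σ₋ = E₂₁`. -/
def sigmaMinus : Matrix (Fin 2) (Fin 2) R := !![0, 0; 1, 0]

variable {R}

local notation "σ₃" => sigma3 R
local notation "σ₊" => sigmaPlus R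
local notation "σ₋" => sigmaMinus R
local notation "I₂" => (1 : Matrix (Fin 2) (Fin 2) R)

/-- A value `α σ₃ + β σ₊ + γ σ₋` of the traceless Lax matrix `𝒜` of the Mumford system. -/
def laxMatrix (α β γ : R) : Matrix (Fin 2) (Fin 2) R :=
  α • σ₃ + β • σ₊ + γ • σ₋

theorem laxMatrix_eq (α β γ : R) : laxMatrix α β γ = !![α, β; γ, -α] := by
  simp [laxMatrix, sigma3, sigmaPlus, sigmaMinus]

theorem laxMatrix_sub_laxMatrix (α β γ α' β' γ' : R) :
    laxMatrix α β γ - laxMatrix α' β' γ' = laxMatrix (α - α') (β - β') (γ - γ') := by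
  simp only [laxMatrix]
  module

theorem laxMatrix_lie_diag_one_zero (α β γ : R) :
    ⁅laxMatrix α β γ, !![1, 0; 0, 0]⁆ = γ • σ₋ - β • σ₊ := by
  rw [laxMatrix_eq, Ring.lie_def]
  ext i j
  fin_cases i <;> fin_cases j <;> simp [sigmaPlus, sigmaMinus]

theorem laxMatrix_lie_sigmaPlus (α β γ : R) :
    ⁅laxMatrix α β γ, σ₊⁆ = (2 * α) • σ₊ - γ • σ₃ := by
  rw [laxMatrix_eq, Ring.lie_def]
  simp [sigma3, sigmaPlus, two_mul]

theorem laxMatrix_lie_sigmaMinus (α β γ : R) :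
    ⁅laxMatrix α β γ, σ₋⁆ = β • σ₃ - (2 * α) • σ₋ := by
  rw [laxMatrix_eq, Ring.lie_def]
  simp [sigma3, sigmaMinus, two_mul, sub_eq_add_neg]

theorem permP_eq_permMatrix :
    (permP : Matrix _ _ R) = Equiv.Perm.permMatrix R (Equiv.prodComm (Fin 2) (Fin 2)) := by
  ext ⟨i, j⟩ ⟨k, l⟩
  fin_cases i <;> fin_cases j <;> fin_cases k <;> fin_cases l <;>
    simp [permP, kron, PEquiv.toMatrix_apply]

theorem permP_eq_kronecker_sigma :
    (permP : Matrix _ _ R) = !![1, 0; 0, 0] ⊗ₖ σ₃ + σ₊ ⊗ₖ σ₋ +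
      σ₋ ⊗ₖ σ₊ + I₂ ⊗ₖ !![0, 0; 0, 1] := by
  have hσ : σ₃ = !![1, 0; 0, 0] - !![0, 0; 0, 1] := by
    ext i j
    fin_cases i <;> fin_cases j <;> simp [sigma3]
  have hone : I₂ = !![1, 0; 0, 0] + !![0, 0; 0, 1] := by
    ext i j
    fin_cases i <;> fin_cases j <;> simp
  have hP : (permP : Matrix _ _ R) =
      !![1, 0; 0, 0] ⊗ₖ !![1, 0; 0, 0] + σ₊ ⊗ₖ σ₋ +
        σ₋ ⊗ₖ σ₊ + !![0, 0; 0, 1] ⊗ₖ !![0, 0; 0, 1] := rfl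
  rw [hP, hσ, hone, kronecker_sub, add_kronecker]
  abel

theorem kronecker_one_lie_permP (C : Matrix (Fin 2) (Fin 2) R) :
    ⁅C ⊗ₖ I₂, permP⁆ =
      ⁅C, !![1, 0; 0, 0]⁆ ⊗ₖ σ₃ + ⁅C, σ₊⁆ ⊗ₖ σ₋ + ⁅C, σ₋⁆ ⊗ₖ σ₊ := by
  have hone : ⁅C, I₂⁆ = 0 := (Commute.one_right C).lie_eq
  rw [permP_eq_kronecker_sigma]
  simp only [lie_add, kronecker_one_lie_kronecker, hone, zero_kronecker, add_zero]

theorem laxMatrix_kronecker_one_lie_permP (α β γ : R) :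
    ⁅laxMatrix α β γ ⊗ₖ I₂, permP⁆ =
      (2 * α) • (σ₊ ⊗ₖ σ₋ - σ₋ ⊗ₖ σ₊)
        + β • (σ₃ ⊗ₖ σ₊ - σ₊ ⊗ₖ σ₃)
        - γ • (σ₃ ⊗ₖ σ₋ - σ₋ ⊗ₖ σ₃) := by
  rw [kronecker_one_lie_permP, laxMatrix_lie_diag_one_zero, laxMatrix_lie_sigmaPlus,
    laxMatrix_lie_sigmaMinus]
  simp only [sub_kronecker, smul_kronecker]
  module

theorem laxMatrix_kronecker_lie_sigmaMinus_kronecker_sigmaMinus (α β γ α' β' γ' : R) :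
    ⁅laxMatrix α β γ ⊗ₖ I₂ - I₂ ⊗ₖ laxMatrix α' β' γ', σ₋ ⊗ₖ σ₋⁆ =
      (-(2 * (α - α'))) • (σ₋ ⊗ₖ σ₋)
        + β • (σ₃ ⊗ₖ σ₋) - β' • (σ₋ ⊗ₖ σ₃) := by
  rw [sub_lie, kronecker_one_lie_kronecker, one_kronecker_lie_kronecker, laxMatrix_lie_sigmaMinus,
    laxMatrix_lie_sigmaMinus]
  simp only [sub_kronecker, kronecker_sub, smul_kronecker, kronecker_smul]
  module

theorem poisson_bracket_computation_general (c α β γ α' β' γ' : R) :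
    ⁅laxMatrix α β γ ⊗ₖ I₂ + I₂ ⊗ₖ laxMatrix α' β' γ', c • permP⁆
      + ⁅laxMatrix α β γ ⊗ₖ I₂ - I₂ ⊗ₖ laxMatrix α' β' γ', σ₋ ⊗ₖ σ₋⁆ =
      (-(2 * (α - α'))) • (σ₋ ⊗ₖ σ₋)
        + (2 * (c * (α - α'))) • (σ₊ ⊗ₖ σ₋ - σ₋ ⊗ₖ σ₊)
        + (c * (β - β')) • (σ₃ ⊗ₖ σ₊ - σ₊ ⊗ₖ σ₃)
        - (c * (γ - γ')) • (σ₃ ⊗ₖ σ₋ - σ₋ ⊗ₖ σ₃)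
        + β • (σ₃ ⊗ₖ σ₋) - β' • (σ₋ ⊗ₖ σ₃) := by
  rw [lie_smul, permP_eq_permMatrix, kronecker_one_add_one_kronecker_lie_permMatrix,
    ← permP_eq_permMatrix, laxMatrix_sub_laxMatrix, laxMatrix_kronecker_one_lie_permP,
    laxMatrix_kronecker_lie_sigmaMinus_kronecker_sigmaMinus]
  module

end PauliBracket

/-- **Computation of the Mumford-system Poisson bracket (Proposition B.5):**
`[𝒜(λ)⊗I + I⊗𝒜(μ), 𝒫/(λ-μ)] + [𝒜(λ)⊗I - I⊗𝒜(μ), Δ]` equals the explicit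
right-hand side of Proposition `prop-B-a` of the paper. -/
theorem poisson_bracket_computation (K : Type*) [Field K]
    (lam mu : K) (hlm : lam ≠ mu)
    (αl βl γl αm βm γm : K) :
    let σ3 : Matrix (Fin 2) (Fin 2) K := !![1, 0; 0, -1]
    let σp : Matrix (Fin 2) (Fin 2) K := !![0, 1; 0, 0]
    let σm : Matrix (Fin 2) (Fin 2) K := !![0, 0; 1, 0]
    let Al : Matrix (Fin 2) (Fin 2) K := αl • σ3 + βl • σp + γl • σm
    let Am : Matrix (Fin 2) (Fin 2) K := αm • σ3 + βm • σp + γm • σm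
    let r : Matrix (Fin 2 × Fin 2) (Fin 2 × Fin 2) K := (lam - mu)⁻¹ • permP
    let Δ : Matrix (Fin 2 × Fin 2) (Fin 2 × Fin 2) K := kron σm σm
    let X : Matrix (Fin 2 × Fin 2) (Fin 2 × Fin 2) K := kron Al 1 + kron 1 Am
    let Y : Matrix (Fin 2 × Fin 2) (Fin 2 × Fin 2) K := kron Al 1 - kron 1 Am
    (X * r - r * X) + (Y * Δ - Δ * Y)
      = (-(2 * (αl - αm))) • kron σm σm
        + (2 * ((αl - αm) / (lam - mu))) • (kron σp σm - kron σm σp)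
        + ((βl - βm) / (lam - mu)) • (kron σ3 σp - kron σp σ3)
        - ((γl - γm) / (lam - mu)) • (kron σ3 σm - kron σm σ3)
        + βl • kron σ3 σm - βm • kron σm σ3 := by
  simp only [div_eq_inv_mul]
  exact poisson_bracket_computation_general (lam - mu)⁻¹ αl βl γl αm βm γm
end

section
/- Let K be a field, g ≥ 1, let q₁, …, q_g ∈ K be pairwise distinct, and let P₁, …, P_g ∈ K. Define Qᵢ := eᵢ(q₁, …, q_g) (the i-th elementary symmetric polynomial evaluated at the qⱼ, with Q₀ = 1) and, for i ∈ [1, g], pᵢ := Σ_{k=1}^{g} P_k · e_{k−1}({qⱼ : j ≠ i}) (so pᵢ = Σ_k P_k · ∂e_k/∂qᵢ evaluated at q). Then the Lagrange interpolation polynomial satisfies, as an identity in K[λ]: −Σ_{i=1}^{g} pᵢ · Π_{j≠i} (λ−qⱼ)/(qᵢ−qⱼ) = Σ_{j=0}^{g−1} (−1)^{j+1} · (Σ_{i=j+1}^{g} Pᵢ·Q_{i−j−1}) · λ^{j}. -/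
/-- The `k`-th elementary symmetric polynomial of the family `v` over the
finite index set `s`:  `e_k = Σ_{i₁<⋯<i_k} v_{i₁}⋯v_{i_k}`. -/
noncomputable def esymmVal {ι K : Type*} [DecidableEq ι] [CommRing K]
    (s : Finset ι) (v : ι → K) (k : ℕ) : K :=
  ∑ t ∈ Finset.powersetCard k s, ∏ i ∈ t, v i

/-
Since `eₖ(s ∖ i) = eₖ(s) - qᵢ eₖ₋₁(s ∖ i)`, the number `eₖ(s ∖ i)` is a polynomial of degree `k` in
`qᵢ` whose coefficients `± eₖ₋ⱼ(s)` do not depend on `i`. For `k < #s` this polynomial therefore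
interpolates the values `eₖ(s ∖ i)` at the nodes `qᵢ`, and the theorem follows from the linearity
of interpolation in the values.
-/

section CommRing

open Finset Polynomial

variable {ι R : Type*} [DecidableEq ι] [CommRing R] (s : Finset ι) (v : ι → R)

theorem esymmVal_zero : esymmVal s v 0 = 1 := by
  simp [esymmVal]

variable {s} in
theorem esymmVal_insert_succ {i : ι} (hi : i ∉ s) (k : ℕ) :
    esymmVal (insert i s) v (k + 1) = esymmVal s v (k + 1) + v i * esymmVal s v k := by
  simp only [esymmVal, ← esymm_map_val, insert_val_of_notMem hi, Multiset.map_cons,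
    Multiset.esymm, Multiset.powersetCard_cons, Multiset.map_add, Multiset.map_map,
    Function.comp_def, Multiset.prod_cons, Multiset.sum_add, Multiset.sum_map_mul_left]

variable {s} in
theorem esymmVal_erase_succ {i : ι} (hi : i ∈ s) (k : ℕ) :
    esymmVal (s.erase i) v (k + 1) = esymmVal s v (k + 1) - v i * esymmVal (s.erase i) v k := by
  rw [eq_sub_iff_add_eq, ← esymmVal_insert_succ v (notMem_erase i s), insert_erase hi]

/-- The polynomial `eₖ(s) - eₖ₋₁(s) X + ⋯ + (-1)ᵏ Xᵏ`, which expresses `eₖ(s ∖ i)` in terms of the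
deleted value `v i`. It is the coefficient of `tᵏ` in the power series
`∏ j ∈ s, (1 + v j t) / (1 + X t)`. -/
noncomputable def esymmErasePoly (k : ℕ) : R[X] :=
  ∑ j ∈ range (k + 1), C ((-1) ^ j * esymmVal s v (k - j)) * X ^ j

theorem esymmErasePoly_zero : esymmErasePoly s v 0 = 1 := by
  simp [esymmErasePoly, esymmVal_zero]

theorem esymmErasePoly_succ (k : ℕ) :
    esymmErasePoly s v (k + 1) = C (esymmVal s v (k + 1)) - X * esymmErasePoly s v k := by
  rw [esymmErasePoly, sum_range_succ', esymmErasePoly, mul_sum, sub_eq_neg_add,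
    ← sum_neg_distrib]
  congr 1
  · refine sum_congr rfl fun j _ => ?_
    rw [Nat.add_sub_add_right, pow_succ', neg_one_mul, neg_mul, C_neg]
    ring
  · simp

theorem degree_esymmErasePoly_le (k : ℕ) : (esymmErasePoly s v k).degree ≤ k := by
  refine (degree_sum_le _ _).trans (Finset.sup_le fun j hj => ?_)
  refine (degree_C_mul_X_pow_le j _).trans ?_
  exact_mod_cast Nat.lt_succ_iff.mp (mem_range.mp hj)

variable {s} in
theorem eval_esymmErasePoly {i : ι} (hi : i ∈ s) (k : ℕ) :
    (esymmErasePoly s v k).eval (v i) = esymmVal (s.erase i) v k := by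
  induction k with
  | zero => simp [esymmErasePoly_zero, esymmVal_zero]
  | succ k ih => simp [esymmErasePoly_succ, esymmVal_erase_succ v hi, ih]

theorem sum_smul_esymmErasePoly (P : ℕ → R) (n : ℕ) :
    ∑ k ∈ Icc 1 n, P k • esymmErasePoly s v (k - 1) =
      ∑ j ∈ range n,
        C ((-1) ^ j * ∑ k ∈ Icc (j + 1) n, P k * esymmVal s v (k - j - 1)) * X ^ j := by
  have expand : ∀ k ∈ Icc 1 n, P k • esymmErasePoly s v (k - 1) =
      ∑ j ∈ range k, C ((-1) ^ j * (P k * esymmVal s v (k - j - 1))) * X ^ j := by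
    intro k hk
    rw [esymmErasePoly, Nat.sub_add_cancel (mem_Icc.mp hk).1, smul_sum]
    refine sum_congr rfl fun j _ => ?_
    rw [smul_eq_C_mul, ← mul_assoc, ← C_mul, mul_left_comm, Nat.sub_right_comm]
  rw [sum_congr rfl expand,
    sum_comm' (t' := range n) (s' := fun j => Icc (j + 1) n)
      (by intro k j; simp only [mem_range, mem_Icc]; omega)]
  simp only [mul_sum, map_sum, sum_mul]

end CommRing

section Field

open Finset Polynomial

variable {ι K : Type*} [DecidableEq ι] [Field K] {s : Finset ι} {v : ι → K}

theorem interpolate_esymmVal_erase (hv : Set.InjOn v s) {k : ℕ} (hk : k < #s) :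
    Lagrange.interpolate s v (fun i => esymmVal (s.erase i) v k) = esymmErasePoly s v k := by
  have degree_lt : (esymmErasePoly s v k).degree < #s :=
    (degree_esymmErasePoly_le s v k).trans_lt (by exact_mod_cast hk)
  exact (Lagrange.eq_interpolate_of_eval_eq _ hv degree_lt fun i hi =>
    eval_esymmErasePoly v hi k).symm

theorem interpolate_sum_mul_esymmVal_erase (hv : Set.InjOn v s) {n : ℕ} (hn : n ≤ #s)
    (P : ℕ → K) :
    Lagrange.interpolate s v (fun i => ∑ k ∈ Icc 1 n, P k * esymmVal (s.erase i) v (k - 1)) =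
      ∑ k ∈ Icc 1 n, P k • esymmErasePoly s v (k - 1) := by
  have values_eq : (fun i => ∑ k ∈ Icc 1 n, P k * esymmVal (s.erase i) v (k - 1)) =
      ∑ k ∈ Icc 1 n, P k • fun i => esymmVal (s.erase i) v (k - 1) := by
    ext i
    simp only [Finset.sum_apply, Pi.smul_apply, smul_eq_mul]
  rw [values_eq, map_sum]
  refine sum_congr rfl fun k hk => ?_
  rw [mem_Icc] at hk
  rw [map_smul, interpolate_esymmVal_erase hv (by omega)]

theorem lagrange_polynomial_symmetric_coordinates_general (hv : Set.InjOn v s)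
    {n : ℕ} (hn : n ≤ #s) (P : ℕ → K) :
    (-∑ i ∈ s, C ((∑ k ∈ Icc 1 n, P k * esymmVal (s.erase i) v (k - 1))
          / ∏ j ∈ s.erase i, (v i - v j)) * ∏ j ∈ s.erase i, (X - C (v j))) =
      ∑ j ∈ range n,
        C ((-1) ^ (j + 1) * ∑ k ∈ Icc (j + 1) n, P k * esymmVal s v (k - j - 1)) * X ^ j := by
  rw [← Lagrange.interpolate_eq_sum, interpolate_sum_mul_esymmVal_erase hv hn,
    sum_smul_esymmErasePoly, ← sum_neg_distrib]
  simp only [pow_succ', neg_mul, one_mul, C_neg]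

end Field

/-- **The Lagrange polynomial in symmetric Darboux coordinates.**  With
`Qᵢ = eᵢ(q₁,…,q_g)` and `pᵢ = Σ_{k=1}^{g} P_k e_{k-1}({qⱼ : j ≠ i})`, the
Lagrange interpolation polynomial `-Σᵢ pᵢ Π_{j≠i}(λ-qⱼ)/(qᵢ-qⱼ)` equals
`Σ_{j=0}^{g-1} (-1)^{j+1} (Σ_{i=j+1}^{g} Pᵢ Q_{i-j-1}) λ^j`. -/
theorem lagrange_polynomial_symmetric_coordinates
    (K : Type*) [Field K] (g : ℕ) (hg : 1 ≤ g)
    (q : Fin g → K) (hq : Function.Injective q) (P : ℕ → K) :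
    (-∑ i : Fin g,
      Polynomial.C ((∑ k ∈ Finset.Icc 1 g, P k * esymmVal (Finset.univ.erase i) q (k - 1))
          / ∏ j ∈ Finset.univ.erase i, (q i - q j))
        * ∏ j ∈ Finset.univ.erase i, (Polynomial.X - Polynomial.C (q j)))
      = ∑ j ∈ Finset.range g,
          Polynomial.C ((-1 : K) ^ (j + 1)
              * ∑ i ∈ Finset.Icc (j + 1) g, P i * esymmVal Finset.univ q (i - j - 1))
            * Polynomial.X ^ j := by
  exact lagrange_polynomial_symmetric_coordinates_general hq.injOn (Finset.card_fin g).ge P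
end

section
/- Let K be a commutative ring in which 2 is invertible, g ≥ 1, let x ∈ K, and let c₋₁ := x/2 and c₁, c₃, …, c_{2g+1} ∈ K with c_{2g+1} = 1. Suppose α₋₁, α₁, α₃, …, α_{2g+1} ∈ K satisfy: α_{2g+1} = 1; for every k ∈ [g+1, 2g], Σ_{m=k−g}^{g+1} α_{2m−1}·α_{2k−2m+1} = Σ_{i=k−g}^{g+1} c_{2i−1}·c_{2k−2i+1}; and Σ_{m=0}^{g+1} α_{2m−1}·α_{2g−2m+1} = Σ_{i=1}^{g} c_{2i−1}·c_{2g−2i+1} + x. Then α_{2m−1} = c_{2m−1} for every m ∈ [0, g]; in particular α₋₁ = x/2. -/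
/-!
Multiplying `ξ(λ) = ∑ α_{2m-1} λ^{(2m-1)/2}` by `λ^{1/2}` clears the half-integer exponents and
gives a polynomial `P` of degree `g + 1`; let `Q` be the one built from the times `c_{2m-1}`. The
hypotheses say that `P ^ 2` and `Q ^ 2` agree in all degrees `≥ g + 1`, that is, `(P + Q) * (P - Q)`
has degree less than `g + 1`. But `P + Q` has degree `g + 1` and leading coefficient `2`, which is
not a zero divisor, so `P - Q = 0`.
-/

section

open Polynomial Finset
open scoped nonZeroDivisors

theorem eq_of_degree_sq_sub_sq_lt {R : Type*} [CommRing R] {p q : R[X]}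
    (hlead : (p + q).leadingCoeff ∈ R⁰) (hdeg : (p ^ 2 - q ^ 2).degree < (p + q).degree) :
    p = q := by
  by_contra hne
  have hsub : p - q ≠ 0 := sub_ne_zero.mpr hne
  have hlead_mul : (p + q).leadingCoeff * (p - q).leadingCoeff ≠ 0 := fun h ↦
    hsub (leadingCoeff_eq_zero.mp ((mul_left_mem_nonZeroDivisors_eq_zero_iff hlead).mp h))
  rw [sq_sub_sq, degree_mul' hlead_mul] at hdeg
  exact hdeg.not_ge (le_add_of_nonneg_right (zero_le_degree_iff.mpr hsub))

theorem coeff_mul_add_of_natDegree_le {R : Type*} [Semiring R] {p q : R[X]} {n : ℕ}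
    (hp : p.natDegree ≤ n) (hq : q.natDegree ≤ n) (j : ℕ) :
    (p * q).coeff (n + j) = ∑ m ∈ Icc j n, p.coeff m * q.coeff (n + j - m) := by
  rw [coeff_mul, Nat.sum_antidiagonal_eq_sum_range_succ fun i k ↦ p.coeff i * q.coeff k]
  have hsubset : Icc j n ⊆ range (n + j + 1) := fun m ↦ by
    simp only [mem_Icc, mem_range]
    omega
  refine (sum_subset hsubset fun m _ hnotMem ↦ ?_).symm
  rw [mem_Icc, not_and_or, not_le, not_le] at hnotMem
  rcases hnotMem with hlow | hhigh
  · rw [coeff_eq_zero_of_natDegree_lt (p := q) (by omega), mul_zero]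
  · rw [coeff_eq_zero_of_natDegree_lt (p := p) (by omega), zero_mul]

theorem degree_sq_sub_sq_lt {R : Type*} [Ring R] {p q : R[X]} {n : ℕ}
    (hp : p.natDegree ≤ n) (hq : q.natDegree ≤ n) (htop : p.coeff n = q.coeff n)
    (hsum : ∀ j < n, ∑ m ∈ Icc j n, p.coeff m * p.coeff (n + j - m) =
      ∑ m ∈ Icc j n, q.coeff m * q.coeff (n + j - m)) :
    (p ^ 2 - q ^ 2).degree < n := by
  refine (degree_lt_iff_coeff_zero _ _).mpr fun k hk ↦ ?_
  obtain ⟨j, rfl⟩ := Nat.exists_eq_add_of_le hk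
  rw [coeff_sub, sq, sq, coeff_mul_add_of_natDegree_le hp hp,
    coeff_mul_add_of_natDegree_le hq hq, sub_eq_zero]
  rcases lt_trichotomy j n with hlt | rfl | hgt
  · exact hsum j hlt
  · simp only [Icc_self, sum_singleton, Nat.add_sub_cancel, htop]
  · rw [Icc_eq_empty_of_lt hgt, sum_empty, sum_empty]

theorem eq_of_sum_Icc_coeff_mul_coeff_eq {R : Type*} [CommRing R] {p q : R[X]} {n : ℕ}
    (hp : p.natDegree ≤ n) (hq : q.natDegree ≤ n) (htop : p.coeff n = q.coeff n)
    (hreg : 2 * q.coeff n ∈ R⁰)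
    (hsum : ∀ j < n, ∑ m ∈ Icc j n, p.coeff m * p.coeff (n + j - m) =
      ∑ m ∈ Icc j n, q.coeff m * q.coeff (n + j - m)) :
    p = q := by
  nontriviality R
  have hcoeff : (p + q).coeff n = 2 * q.coeff n := by rw [coeff_add, htop, two_mul]
  have hdeg : (p + q).degree = n :=
    degree_eq_of_le_of_coeff_ne_zero
      (degree_le_of_natDegree_le (natDegree_add_le_of_degree_le hp hq))
      (hcoeff ▸ nonZeroDivisors.ne_zero hreg)
  have hlead : (p + q).leadingCoeff ∈ R⁰ := by
    rwa [leadingCoeff, natDegree_eq_of_degree_eq_some hdeg, hcoeff]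
  exact eq_of_degree_sq_sub_sq_lt hlead (hdeg ▸ degree_sq_sub_sq_lt hp hq htop hsum)

theorem eq_of_sum_Icc_mul_eq {R : Type*} [CommRing R] {n : ℕ} {a b : ℕ → R}
    (htop : a n = b n) (hreg : 2 * b n ∈ R⁰)
    (hsum : ∀ j < n, ∑ m ∈ Icc j n, a m * a (n + j - m) = ∑ m ∈ Icc j n, b m * b (n + j - m))
    {m : ℕ} (hm : m ≤ n) : a m = b m := by
  let poly (f : ℕ → R) : R[X] := PowerSeries.trunc (n + 1) (PowerSeries.mk f)
  have hdeg (f : ℕ → R) : (poly f).natDegree ≤ n :=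
    Nat.lt_succ_iff.mp (PowerSeries.natDegree_trunc_lt _ n)
  have hcoeff (f : ℕ → R) {k : ℕ} (hk : k ≤ n) : (poly f).coeff k = f k := by
    rw [PowerSeries.coeff_trunc, if_pos (Nat.lt_succ_iff.mpr hk), PowerSeries.coeff_mk]
  have hsum_coeff (f : ℕ → R) (j : ℕ) :
      ∑ m ∈ Icc j n, (poly f).coeff m * (poly f).coeff (n + j - m) =
        ∑ m ∈ Icc j n, f m * f (n + j - m) :=
    sum_congr rfl fun k hk ↦ by
      rw [mem_Icc] at hk
      rw [hcoeff f hk.2, hcoeff f (by omega)]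
  have hpoly : poly a = poly b :=
    eq_of_sum_Icc_coeff_mul_coeff_eq (hdeg a) (hdeg b)
      (by rw [hcoeff a le_rfl, hcoeff b le_rfl, htop]) (by rwa [hcoeff b le_rfl])
      (fun j hj ↦ by rw [hsum_coeff, hsum_coeff, hsum j hj])
  rw [← hcoeff a hm, hpoly, hcoeff b hm]

theorem sum_range_mul_reflect_eq_sum_Icc_add {R : Type*} [CommSemiring R] (g : ℕ) (c : ℕ → R) :
    ∑ m ∈ range (g + 2), c m * c (g + 1 - m) =
      ∑ m ∈ Icc 1 g, c m * c (g + 1 - m) + 2 * c (g + 1) * c 0 := by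
  rw [sum_range_succ, range_eq_Ico, sum_eq_sum_Ico_succ_bot g.succ_pos, Nat.sub_self,
    Nat.sub_zero, zero_add, Nat.succ_eq_add_one, Ico_add_one_right_eq_Icc]
  ring

theorem identification_eigenvalue_coefficients_general {K : Type*} [CommRing K] {g : ℕ} {x : K}
    {c α : ℕ → K} (hreg : 2 * c (g + 1) ∈ K⁰) (hc0 : 2 * c (g + 1) * c 0 = x)
    (hαtop : α (g + 1) = c (g + 1))
    (hmid : ∀ k ∈ Icc (g + 1) (2 * g),
      ∑ m ∈ Icc (k - g) (g + 1), α m * α (k + 1 - m) =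
        ∑ i ∈ Icc (k - g) (g + 1), c i * c (k + 1 - i))
    (hlow : ∑ m ∈ range (g + 2), α m * α (g + 1 - m) =
      ∑ i ∈ Icc 1 g, c i * c (g + 1 - i) + x) :
    ∀ m ≤ g, α m = c m := by
  intro m hm
  refine eq_of_sum_Icc_mul_eq hαtop hreg (fun j hj ↦ ?_) (hm.trans g.le_succ)
  rcases j.eq_zero_or_pos with rfl | hpos
  · rw [← hc0, ← sum_range_mul_reflect_eq_sum_Icc_add,
      Nat.range_eq_Icc_zero_sub_one _ (by omega)] at hlow
    exact hlow
  · have hk := hmid (g + j) (mem_Icc.mpr ⟨by omega, by omega⟩)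
    rwa [Nat.add_sub_cancel_left, Nat.add_right_comm] at hk

end

/-- **Identification of the eigenvalue expansion coefficients with the times
(equations `Identification2`/`SolIDentification`).**  Here `α m` represents
`α_{2m-1}` and `c m` represents `c_{2m-1}` (`m ∈ [0, g+1]`), with
`c 0 = c_{-1} = x/2` and `c (g+1) = c_{2g+1} = 1`.  If `α (g+1) = 1`, the
quadratic relations hold for every `k ∈ [g+1, 2g]`, and the `λ^g`-relation
holds, then `α m = c m` for every `m ∈ [0, g]`; in particular `α₋₁ = x/2`. -/
theorem identification_eigenvalue_coefficients
    (K : Type*) [CommRing K] [Invertible (2 : K)] (g : ℕ) (hg : 1 ≤ g)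
    (x : K) (c α : ℕ → K)
    (hc0 : c 0 = ⅟(2 : K) * x) (hctop : c (g + 1) = 1)
    (hαtop : α (g + 1) = 1)
    (hmid : ∀ k ∈ Finset.Icc (g + 1) (2 * g),
      (∑ m ∈ Finset.Icc (k - g) (g + 1), α m * α (k + 1 - m))
        = ∑ i ∈ Finset.Icc (k - g) (g + 1), c i * c (k + 1 - i))
    (hlow : (∑ m ∈ Finset.range (g + 2), α m * α (g + 1 - m))
        = (∑ i ∈ Finset.Icc 1 g, c i * c (g + 1 - i)) + x) :
    (∀ m ≤ g, α m = c m) ∧ α 0 = ⅟(2 : K) * x := by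
  have hα : ∀ m ≤ g, α m = c m := identification_eigenvalue_coefficients_general
    (by simpa [hctop] using (isUnit_of_invertible (2 : K)).mem_nonZeroDivisors)
    (by rw [hctop, mul_one, hc0, mul_invOf_cancel_left]) (hαtop.trans hctop.symm) hmid hlow
  exact ⟨hα, (hα 0 g.zero_le).trans hc0⟩
end
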